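/- arXiv:1403.1682 — 2 statements merged into one kernel-verified Lean document; each statement's English description precedes it below -/
import Mathlib

section
/- Suppose that in degree k the spaces H^k_∂, H^k_∂̄, H^k_BC, H^k_A, A^k, B^k, C^k, D^k, E^k, F^k are all finite-dimensional, and that dim H^k_A = dim H^k_BC and dim H^k_∂ = dim H^k_∂̄. Then dim H^k_BC ≥ dim H^k_∂̄. (This is the algebraic core of the paper's main Frölicher-type inequality: on a compact generalized complex manifold the two dimension hypotheses hold by Hodge theory, and the conclusion is the inequality dim GH^k_BC(M) ≥ dim GH^k_∂̄(M).) -/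
open Submodule LinearMap Module

section Setup

variable (U : ℤ → Type*) [∀ k, AddCommGroup (U k)] [∀ k, Module ℂ (U k)]

/-- The identification `U a → U b` induced by an equality `a = b` of degrees. -/
def castU {a b : ℤ} (h : a = b) : U a →ₗ[ℂ] U b := by subst h; exact LinearMap.id

variable (D : ∀ k : ℤ, U k →ₗ[ℂ] U (k + 1)) (Db : ∀ k : ℤ, U k →ₗ[ℂ] U (k - 1))

/-- The composite `∂∂̄ : U^k → U^{k-1} → U^k`. -/
def ddbar (k : ℤ) : U k →ₗ[ℂ] U k :=
  (castU U (show k - 1 + 1 = k by ring)).comp ((D (k - 1)).comp (Db k))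

/-- `ker ∂ ∩ U^k` -/
def kerD (k : ℤ) : Submodule ℂ (U k) := LinearMap.ker (D k)

/-- `ker ∂̄ ∩ U^k` -/
def kerDb (k : ℤ) : Submodule ℂ (U k) := LinearMap.ker (Db k)

/-- `∂(U^{k-1})` -/
def imD (k : ℤ) : Submodule ℂ (U k) :=
  LinearMap.range ((castU U (show k - 1 + 1 = k by ring)).comp (D (k - 1)))

/-- `∂̄(U^{k+1})` -/
def imDb (k : ℤ) : Submodule ℂ (U k) :=
  LinearMap.range ((castU U (show k + 1 - 1 = k by ring)).comp (Db (k + 1)))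

/-- `ker (∂∂̄) ∩ U^k` -/
def kerDDbar (k : ℤ) : Submodule ℂ (U k) := LinearMap.ker (ddbar U D Db k)

/-- `(∂∂̄)(U^k)` -/
def imDDbar (k : ℤ) : Submodule ℂ (U k) := LinearMap.range (ddbar U D Db k)

end Setup

/-- The quotient of a submodule `p` by (the preimage in `p` of) a submodule `q`. -/
abbrev SubQuot {V : Type*} [AddCommGroup V] [Module ℂ V] (p q : Submodule ℂ V) :=
  ↥p ⧸ q.comap p.subtype

/-- The map `p/q → p'/q'` induced by the identity (inclusion) on representatives. -/
def qmap {V : Type*} [AddCommGroup V] [Module ℂ V] {p p' q q' : Submodule ℂ V}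
    (hp : p ≤ p') (hq : q ≤ q') : SubQuot p q →ₗ[ℂ] SubQuot p' q' :=
  Submodule.mapQ _ _ (Submodule.inclusion hp) fun x hx => by
    simp only [Submodule.mem_comap, Submodule.subtype_apply, Submodule.coe_inclusion] at hx ⊢
    exact hq hx

section Cohomology

variable (U : ℤ → Type*) [∀ k, AddCommGroup (U k)] [∀ k, Module ℂ (U k)]
variable (D : ∀ k : ℤ, U k →ₗ[ℂ] U (k + 1)) (Db : ∀ k : ℤ, U k →ₗ[ℂ] U (k - 1))

/-- `H^k_∂ = (ker ∂ ∩ U^k)/∂(U^{k-1})` -/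
abbrev Hd (k : ℤ) := SubQuot (kerD U D k) (imD U D k)

/-- `H^k_∂̄ = (ker ∂̄ ∩ U^k)/∂̄(U^{k+1})` -/
abbrev Hdb (k : ℤ) := SubQuot (kerDb U Db k) (imDb U Db k)

/-- `H^k_BC = (ker ∂ ∩ ker ∂̄ ∩ U^k)/(∂∂̄)(U^k)` -/
abbrev HBC (k : ℤ) := SubQuot (kerD U D k ⊓ kerDb U Db k) (imDDbar U D Db k)

/-- `H^k_A = (ker (∂∂̄) ∩ U^k)/(∂(U^{k-1}) + ∂̄(U^{k+1}))` -/
abbrev HA (k : ℤ) := SubQuot (kerDDbar U D Db k) (imD U D k ⊔ imDb U Db k)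

/-- `A^k = (∂(U^{k-1}) ∩ ∂̄(U^{k+1}))/(∂∂̄)(U^k)` -/
abbrev Avar (k : ℤ) := SubQuot (imD U D k ⊓ imDb U Db k) (imDDbar U D Db k)

/-- `B^k = (ker ∂̄ ∩ ∂(U^{k-1}))/(∂∂̄)(U^k)` -/
abbrev Bvar (k : ℤ) := SubQuot (kerDb U Db k ⊓ imD U D k) (imDDbar U D Db k)

/-- `C^k = (ker (∂∂̄) ∩ U^k)/((ker ∂̄ ∩ U^k) + ∂(U^{k-1}))` -/
abbrev Cvar (k : ℤ) := SubQuot (kerDDbar U D Db k) (kerDb U Db k ⊔ imD U D k)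

/-- `D^k = (ker ∂ ∩ ∂̄(U^{k+1}))/(∂∂̄)(U^k)` -/
abbrev Dvar (k : ℤ) := SubQuot (kerD U D k ⊓ imDb U Db k) (imDDbar U D Db k)

/-- `E^k = (ker (∂∂̄) ∩ U^k)/((ker ∂ ∩ U^k) + ∂̄(U^{k+1}))` -/
abbrev Evar (k : ℤ) := SubQuot (kerDDbar U D Db k) (kerD U D k ⊔ imDb U Db k)

/-- `F^k = (ker (∂∂̄) ∩ U^k)/((ker ∂ ∩ U^k) + (ker ∂̄ ∩ U^k))` -/
abbrev Fvar (k : ℤ) := SubQuot (kerDDbar U D Db k) (kerD U D k ⊔ kerDb U Db k)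

end Cohomology

/-!
For submodules `I ≤ K` and `J ≤ L` of one module, the modular law gives
`dim K/I + dim L/J = dim (K + L)/(I + J) + dim (K ∩ L)/(I ∩ J)`.
With `K/I = H_∂` and `L/J = H_∂̄`, the first term on the right is at most `dim H_A`, because
`ker ∂ + ker ∂̄ ⊆ ker ∂∂̄`, and the second is at most `dim H_BC`, because `im ∂∂̄ ⊆ im ∂ ∩ im ∂̄`.
Hence `dim H_∂ + dim H_∂̄ ≤ dim H_A + dim H_BC`, which the two equalities of dimensions turn into
`2 dim H_∂̄ ≤ 2 dim H_BC`.
-/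

universe u v

section RelRank

variable {R : Type v} {M : Type u} [Ring R] [AddCommGroup M] [Module R M]

/-- The rank of `p` modulo `q`, that is, of the subquotient `p / (q ⊓ p)`; for `R = ℂ` this is the
rank of `SubQuot p q`. The order of the arguments is that of `Subgroup.relIndex`. -/
noncomputable def relRank (q p : Submodule R M) : Cardinal :=
  Module.rank R (p ⧸ q.submoduleOf p)

theorem relRank_anti_left {q q' : Submodule R M} (p : Submodule R M) (hq : q ≤ q') :
    relRank q' p ≤ relRank q p :=
  rank_le_of_surjective _ (factor_surjective (comap_mono hq))

theorem relRank_mono_right (q : Submodule R M) {p p' : Submodule R M} (hp : p ≤ p') :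
    relRank q p ≤ relRank q p' := by
  let f : p ⧸ q.submoduleOf p →ₗ[R] p' ⧸ q.submoduleOf p' := mapQ _ _ (inclusion hp) le_rfl
  have hf : Function.Injective f := ker_eq_bot.1 (ker_liftQ_eq_bot _ _ _ <| by
    rw [ker_comp, ker_mkQ]
    rfl)
  exact rank_le_of_injective f hf

theorem inf_relRank_right (q p : Submodule R M) : relRank (q ⊓ p) p = relRank q p := by
  have h : (q ⊓ p).submoduleOf p = q.submoduleOf p := by
    simp only [submoduleOf, comap_inf, comap_subtype_self, inf_top_eq]
  rw [relRank, h, relRank]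

theorem relRank_sup_right (q p : Submodule R M) : relRank q (p ⊔ q) = relRank q p := by
  rw [← inf_relRank_right q p, inf_comm]
  exact (quotientInfEquivSupQuotient p q).rank_eq.symm

variable [HasRankNullity.{u} R]

theorem relRank_add_relRank {r q p : Submodule R M} (hrq : r ≤ q) (hqp : q ≤ p) :
    relRank r q + relRank q p = relRank r p := by
  let f : q →ₗ[R] p ⧸ r.submoduleOf p := (r.submoduleOf p).mkQ.comp (inclusion hqp)
  have hker : ker f = r.submoduleOf q := by
    rw [ker_comp, ker_mkQ]
    rfl
  have hrange : range f = (q.submoduleOf p).map (r.submoduleOf p).mkQ := by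
    rw [range_comp, range_inclusion]
    rfl
  have hsub : relRank r q = Module.rank R (range f) := by
    rw [relRank, ← hker]
    exact f.quotKerEquivRange.rank_eq
  have hquot : relRank q p = Module.rank R ((p ⧸ r.submoduleOf p) ⧸ range f) := by
    rw [hrange]
    exact (quotientQuotientEquivQuotient _ _ (comap_mono hrq)).rank_eq.symm
  rw [hsub, hquot, add_comm, rank_quotient_add_rank, relRank]

theorem relRank_sup_add_relRank_inf {I K : Submodule R M} (h : I ≤ K) (L : Submodule R M) :
    relRank (I ⊔ L) (K ⊔ L) + relRank (I ⊓ L) (K ⊓ L) = relRank I K := by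
  have hmod : (I ⊔ L) ⊓ K = K ⊓ L ⊔ I := by
    rw [sup_inf_assoc_of_le L h, inf_comm L, sup_comm]
  have hsup : relRank (I ⊔ L) (K ⊔ L) = relRank (K ⊓ L ⊔ I) K := by
    rw [← hmod, inf_relRank_right, ← relRank_sup_right _ K, ← sup_assoc, sup_eq_left.2 h]
  have hinf : relRank (I ⊓ L) (K ⊓ L) = relRank I (K ⊓ L ⊔ I) := by
    rw [relRank_sup_right, ← inf_relRank_right I, ← inf_assoc, inf_eq_left.2 h]
  rw [hsup, hinf, add_comm, relRank_add_relRank le_sup_right (sup_le inf_le_left h)]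

theorem relRank_sup_sup_add_relRank_inf_inf {I J K L : Submodule R M} (hIK : I ≤ K)
    (hJL : J ≤ L) :
    relRank (I ⊔ J) (K ⊔ L) + relRank (I ⊓ J) (K ⊓ L) = relRank I K + relRank J L := by
  have hL : relRank (I ⊔ J) (I ⊔ L) + relRank (I ⊓ J) (I ⊓ L) = relRank J L := by
    rw [sup_comm I J, sup_comm I L, inf_comm I J, inf_comm I L, relRank_sup_add_relRank_inf hJL]
  calc
    relRank (I ⊔ J) (K ⊔ L) + relRank (I ⊓ J) (K ⊓ L)
      = (relRank (I ⊔ J) (I ⊔ L) + relRank (I ⊔ L) (K ⊔ L)) +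
          (relRank (I ⊓ J) (I ⊓ L) + relRank (I ⊓ L) (K ⊓ L)) := by
        rw [relRank_add_relRank (sup_le_sup_left hJL I) (sup_le_sup_right hIK L),
          relRank_add_relRank (inf_le_inf_left I hJL) (inf_le_inf_right L hIK)]
    _ = relRank J L + relRank I K := by
        rw [add_add_add_comm, hL, relRank_sup_add_relRank_inf hIK]
    _ = relRank I K + relRank J L := add_comm _ _

theorem relRank_add_relRank_le {I J K L N P : Submodule R M} (hIK : I ≤ K) (hJL : J ≤ L)
    (hP : K ⊔ L ≤ P) (hN : N ≤ I ⊓ J) :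
    relRank I K + relRank J L ≤ relRank (I ⊔ J) P + relRank N (K ⊓ L) := by
  rw [← relRank_sup_sup_add_relRank_inf_inf hIK hJL]
  exact add_le_add (relRank_mono_right _ hP) (relRank_anti_left _ hN)

end RelRank

section DoubleComplex

variable {U : ℤ → Type*} [∀ k, AddCommGroup (U k)] [∀ k, Module ℂ (U k)]
variable {D : ∀ k : ℤ, U k →ₗ[ℂ] U (k + 1)} {Db : ∀ k : ℤ, U k →ₗ[ℂ] U (k - 1)}

theorem D_comp_castU_comp_D (hD2 : ∀ k : ℤ, (D (k + 1)).comp (D k) = 0) {a k : ℤ}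
    (h : a + 1 = k) : (D k).comp ((castU U h).comp (D a)) = 0 := by
  subst h
  exact hD2 a

theorem Db_comp_castU_comp_Db (hDb2 : ∀ k : ℤ, (Db (k - 1)).comp (Db k) = 0) {a k : ℤ}
    (h : a - 1 = k) : (Db k).comp ((castU U h).comp (Db a)) = 0 := by
  subst h
  exact hDb2 a

theorem imD_le_kerD (hD2 : ∀ k : ℤ, (D (k + 1)).comp (D k) = 0) (k : ℤ) :
    imD U D k ≤ kerD U D k :=
  range_le_ker_iff.2 (D_comp_castU_comp_D hD2 _)

theorem imDb_le_kerDb (hDb2 : ∀ k : ℤ, (Db (k - 1)).comp (Db k) = 0) (k : ℤ) :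
    imDb U Db k ≤ kerDb U Db k :=
  range_le_ker_iff.2 (Db_comp_castU_comp_Db hDb2 _)

theorem kerDb_le_kerDDbar (k : ℤ) : kerDb U Db k ≤ kerDDbar U D Db k :=
  ker_le_ker_comp (Db k) ((castU U _).comp (D (k - 1)))

theorem imDDbar_le_imD (k : ℤ) : imDDbar U D Db k ≤ imD U D k :=
  range_comp_le_range (Db k) ((castU U _).comp (D (k - 1)))

variable {k : ℤ} (hanti : ddbar U D Db k
  + (castU U (show k + 1 - 1 = k by ring)).comp ((Db (k + 1)).comp (D k)) = 0)

include hanti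

theorem kerD_le_kerDDbar : kerD U D k ≤ kerDDbar U D Db k := by
  rw [kerDDbar, eq_neg_of_add_eq_zero_left hanti, ker_neg]
  exact ker_le_ker_comp (D k) ((castU U _).comp (Db (k + 1)))

theorem imDDbar_le_imDb : imDDbar U D Db k ≤ imDb U Db k := by
  rw [imDDbar, eq_neg_of_add_eq_zero_left hanti, range_neg]
  exact range_comp_le_range (D k) ((castU U _).comp (Db (k + 1)))

end DoubleComplex

theorem frolicher_type_inequality_core_general
    {U : ℤ → Type*} [∀ k, AddCommGroup (U k)] [∀ k, Module ℂ (U k)]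
    {D : ∀ k : ℤ, U k →ₗ[ℂ] U (k + 1)} {Db : ∀ k : ℤ, U k →ₗ[ℂ] U (k - 1)}
    (hD2 : ∀ k : ℤ, (D (k + 1)).comp (D k) = 0)
    (hDb2 : ∀ k : ℤ, (Db (k - 1)).comp (Db k) = 0)
    (hanti : ∀ k : ℤ, ddbar U D Db k
      + (castU U (show k + 1 - 1 = k by ring)).comp ((Db (k + 1)).comp (D k)) = 0)
    (k : ℤ) :
    Module.rank ℂ (Hd U D k) + Module.rank ℂ (Hdb U Db k) ≤
      Module.rank ℂ (HA U D Db k) + Module.rank ℂ (HBC U D Db k) :=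
  relRank_add_relRank_le (imD_le_kerD hD2 k) (imDb_le_kerDb hDb2 k)
    (sup_le (kerD_le_kerDDbar (hanti k)) (kerDb_le_kerDDbar k))
    (le_inf (imDDbar_le_imD k) (imDDbar_le_imDb (hanti k)))

/-- If `dim H^k_A = dim H^k_BC` and `dim H^k_∂ = dim H^k_∂̄` (which hold on a
compact generalized complex manifold by Hodge theory), then `dim H^k_BC ≥ dim H^k_∂̄`. -/
theorem frolicher_type_inequality_core
    (n : ℕ) (U : ℤ → Type*) [∀ k, AddCommGroup (U k)] [∀ k, Module ℂ (U k)]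
    (hvan : ∀ k : ℤ, (n : ℤ) < |k| → ∀ x : U k, x = 0)
    (D : ∀ k : ℤ, U k →ₗ[ℂ] U (k + 1)) (Db : ∀ k : ℤ, U k →ₗ[ℂ] U (k - 1))
    (hD2 : ∀ k : ℤ, (D (k + 1)).comp (D k) = 0)
    (hDb2 : ∀ k : ℤ, (Db (k - 1)).comp (Db k) = 0)
    (hanti : ∀ k : ℤ, ddbar U D Db k
      + (castU U (show k + 1 - 1 = k by ring)).comp ((Db (k + 1)).comp (D k)) = 0)
    (k : ℤ)
    (h1 : FiniteDimensional ℂ (Hd U D k))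
    (h2 : FiniteDimensional ℂ (Hdb U Db k))
    (h3 : FiniteDimensional ℂ (HBC U D Db k))
    (h4 : FiniteDimensional ℂ (HA U D Db k))
    (h5 : FiniteDimensional ℂ (Avar U D Db k))
    (h6 : FiniteDimensional ℂ (Bvar U D Db k))
    (h7 : FiniteDimensional ℂ (Cvar U D Db k))
    (h8 : FiniteDimensional ℂ (Dvar U D Db k))
    (h9 : FiniteDimensional ℂ (Evar U D Db k))
    (h10 : FiniteDimensional ℂ (Fvar U D Db k))
    (hA_eq_BC : finrank ℂ (HA U D Db k) = finrank ℂ (HBC U D Db k))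
    (hd_eq_db : finrank ℂ (Hd U D k) = finrank ℂ (Hdb U Db k)) :
    finrank ℂ (Hdb U Db k) ≤ finrank ℂ (HBC U D Db k) := by
  have h := frolicher_type_inequality_core_general hD2 hDb2 hanti k
  simp only [← finrank_eq_rank, ← Nat.cast_add, Nat.cast_le] at h
  omega
end

section
/- For fixed p ≥ 1 and q ≥ 0, if the map φ^{p,q}_+ : H^{p,q}_BC → H^{p,q}_∂ is injective, then the map φ^{p-1,q}_- : H^{p-1,q}_BC → H^{p-1,q}_∂̄ is surjective. -/
open Submodule LinearMap Module

section Setup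

variable (A : ℤ → ℤ → Type*) [∀ p q, AddCommGroup (A p q)] [∀ p q, Module ℂ (A p q)]

/-- The identification `A p q → A p' q'` induced by equalities of the bidegrees. -/
def castA {p q p' q' : ℤ} (h : p = p') (h' : q = q') : A p q →ₗ[ℂ] A p' q' := by
  subst h; subst h'; exact LinearMap.id

variable (d : ∀ p q : ℤ, A p q →ₗ[ℂ] A (p + 1) q) (db : ∀ p q : ℤ, A p q →ₗ[ℂ] A p (q + 1))

/-- The composite `∂∂̄ : A^{p,q} → A^{p+1,q} → A^{p+1,q+1}`. -/
def ddb (p q : ℤ) : A p q →ₗ[ℂ] A (p + 1) (q + 1) := (db (p + 1) q).comp (d p q)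

/-- `ker ∂ ∩ A^{p,q}` -/
def kerd (p q : ℤ) : Submodule ℂ (A p q) := LinearMap.ker (d p q)

/-- `ker ∂̄ ∩ A^{p,q}` -/
def kerdb (p q : ℤ) : Submodule ℂ (A p q) := LinearMap.ker (db p q)

/-- `∂(A^{p-1,q})` -/
def imd (p q : ℤ) : Submodule ℂ (A p q) :=
  LinearMap.range ((castA A (show p - 1 + 1 = p by ring) rfl).comp (d (p - 1) q))

/-- `∂̄(A^{p,q-1})` -/
def imdb (p q : ℤ) : Submodule ℂ (A p q) :=
  LinearMap.range ((castA A rfl (show q - 1 + 1 = q by ring)).comp (db p (q - 1)))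

/-- `(∂∂̄)(A^{p-1,q-1})` -/
def imddb (p q : ℤ) : Submodule ℂ (A p q) :=
  LinearMap.range
    ((castA A (show p - 1 + 1 = p by ring) (show q - 1 + 1 = q by ring)).comp
      (ddb A d db (p - 1) (q - 1)))

end Setup

section Cohomology

variable (A : ℤ → ℤ → Type*) [∀ p q, AddCommGroup (A p q)] [∀ p q, Module ℂ (A p q)]
variable (d : ∀ p q : ℤ, A p q →ₗ[ℂ] A (p + 1) q) (db : ∀ p q : ℤ, A p q →ₗ[ℂ] A p (q + 1))

/-- `H^{p,q}_∂ = (ker ∂ ∩ A^{p,q})/∂(A^{p-1,q})` -/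
abbrev Hpqd (p q : ℤ) := SubQuot (kerd A d p q) (imd A d p q)

/-- `H^{p,q}_∂̄ = (ker ∂̄ ∩ A^{p,q})/∂̄(A^{p,q-1})` -/
abbrev Hpqdb (p q : ℤ) := SubQuot (kerdb A db p q) (imdb A db p q)

/-- `H^{p,q}_BC = (ker ∂ ∩ ker ∂̄ ∩ A^{p,q})/(∂∂̄)(A^{p-1,q-1})` -/
abbrev HpqBC (p q : ℤ) := SubQuot (kerd A d p q ⊓ kerdb A db p q) (imddb A d db p q)

end Cohomology

section Lemmas

variable (A : ℤ → ℤ → Type*) [∀ p q, AddCommGroup (A p q)] [∀ p q, Module ℂ (A p q)]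
variable (d : ∀ p q : ℤ, A p q →ₗ[ℂ] A (p + 1) q) (db : ∀ p q : ℤ, A p q →ₗ[ℂ] A p (q + 1))

lemma castA_castA {p q p' q' p'' q'' : ℤ} (h1 : p = p') (h2 : q = q') (h3 : p' = p'')
    (h4 : q' = q'') (x : A p q) :
    castA A h3 h4 (castA A h1 h2 x) = castA A (h1.trans h3) (h2.trans h4) x := by
  subst h1; subst h2; subst h3; subst h4; rfl

lemma d_castA {p q p' q' : ℤ} (h : p = p') (h' : q = q') (x : A p q) :
    d p' q' (castA A h h' x) = castA A (show p + 1 = p' + 1 by rw [h]) h' (d p q x) := by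
  subst h; subst h'; rfl

lemma db_castA {p q p' q' : ℤ} (h : p = p') (h' : q = q') (x : A p q) :
    db p' q' (castA A h h' x) = castA A h (show q + 1 = q' + 1 by rw [h']) (db p q x) := by
  subst h; subst h'; rfl

lemma imddb_le_imdb (p q : ℤ) : imddb A d db p q ≤ imdb A db p q := by
  rintro x ⟨y, rfl⟩
  refine ⟨castA A (show p - 1 + 1 = p by ring) rfl (d (p - 1) (q - 1) y), ?_⟩
  simp only [LinearMap.comp_apply, ddb, db_castA, castA_castA]

lemma imddb_le_imd
    (hanti : ∀ p q : ℤ, (db (p + 1) q).comp (d p q) + (d p (q + 1)).comp (db p q) = 0)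
    (p q : ℤ) : imddb A d db p q ≤ imd A d p q := by
  rintro x ⟨y, rfl⟩
  refine ⟨-(castA A rfl (show q - 1 + 1 = q by ring) (db (p - 1) (q - 1) y)), ?_⟩
  have h := DFunLike.congr_fun (hanti (p - 1) (q - 1)) y
  simp only [LinearMap.add_apply, LinearMap.comp_apply, LinearMap.zero_apply] at h
  simp only [LinearMap.comp_apply, map_neg, d_castA, castA_castA, ddb]
  rw [eq_neg_of_add_eq_zero_left h, map_neg]

end Lemmas

section Phi

variable (A : ℤ → ℤ → Type*) [∀ p q, AddCommGroup (A p q)] [∀ p q, Module ℂ (A p q)]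
variable (d : ∀ p q : ℤ, A p q →ₗ[ℂ] A (p + 1) q) (db : ∀ p q : ℤ, A p q →ₗ[ℂ] A p (q + 1))
variable (hanti : ∀ p q : ℤ, (db (p + 1) q).comp (d p q) + (d p (q + 1)).comp (db p q) = 0)

/-- `φ^{p,q}_+ : H^{p,q}_BC → H^{p,q}_∂`, induced by the identity on representatives. -/
def phiPlus (p q : ℤ) : HpqBC A d db p q →ₗ[ℂ] Hpqd A d p q :=
  qmap inf_le_left (imddb_le_imd A d db hanti p q)

/-- `φ^{p,q}_- : H^{p,q}_BC → H^{p,q}_∂̄`, induced by the identity on representatives. -/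
def phiMinus (p q : ℤ) : HpqBC A d db p q →ₗ[ℂ] Hpqdb A db p q :=
  qmap inf_le_right (imddb_le_imdb A d db p q)

end Phi

/-!
Both conditions are inclusions into the subspace `im ∂∂̄` of `A^{p,q}`. The map `φ^{p,q}_+` is
injective exactly when `im ∂ ∩ ker ∂̄ ⊆ im ∂∂̄`. Surjectivity of `φ^{p-1,q}_-` says that every
`∂̄`-closed element of `A^{p-1,q}` becomes `∂`-closed after adding a `∂̄`-exact one; applying `∂`,
this means `∂(ker ∂̄) ⊆ ∂(im ∂̄) = im ∂∂̄`. Since `∂(ker ∂̄) ⊆ im ∂ ∩ ker ∂̄`, the first condition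
implies the second.
-/

section SubQuot

variable {V : Type*} [AddCommGroup V] [Module ℂ V] {P P' Q Q' : Submodule ℂ V}

lemma SubQuot.mk_eq_zero_iff {x : P} :
    (Submodule.Quotient.mk x : SubQuot P Q) = 0 ↔ (x : V) ∈ Q :=
  Submodule.Quotient.mk_eq_zero _

lemma SubQuot.mk_eq_mk_iff {x y : P} :
    (Submodule.Quotient.mk x : SubQuot P Q) = Submodule.Quotient.mk y ↔ (x - y : V) ∈ Q :=
  Submodule.Quotient.eq _

lemma qmap_mk (hP : P ≤ P') (hQ : Q ≤ Q') (x : P) :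
    qmap hP hQ (Submodule.Quotient.mk x) = Submodule.Quotient.mk (inclusion hP x) :=
  rfl

lemma qmap_injective_iff (hP : P ≤ P') (hQ : Q ≤ Q') :
    Function.Injective (qmap hP hQ) ↔ P ⊓ Q' ≤ Q := by
  rw [injective_iff_map_eq_zero, (Submodule.Quotient.mk_surjective _).forall]
  simp only [qmap_mk, SubQuot.mk_eq_zero_iff, coe_inclusion]
  exact ⟨fun h x hx => h ⟨x, hx.1⟩ hx.2, fun h x hx => h ⟨x.2, hx⟩⟩

lemma qmap_surjective_iff (hP : P ≤ P') (hQ : Q ≤ Q') :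
    Function.Surjective (qmap hP hQ) ↔ P' ≤ P ⊔ Q' := by
  rw [Function.Surjective, (Submodule.Quotient.mk_surjective _).forall]
  simp only [(Submodule.Quotient.mk_surjective _).exists, qmap_mk, SubQuot.mk_eq_mk_iff,
    coe_inclusion]
  constructor
  · intro h x hx
    obtain ⟨y, hyx⟩ := h ⟨x, hx⟩
    exact mem_sup.2 ⟨y, y.2, x - y, sub_mem_comm_iff.1 hyx, add_sub_cancel _ _⟩
  · rintro h ⟨x, hx⟩
    obtain ⟨y, hy, z, hz, rfl⟩ := mem_sup.1 (h hx)
    exact ⟨⟨y, hy⟩, by simpa using hz⟩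

end SubQuot

section Images

variable (A : ℤ → ℤ → Type*) [∀ p q, AddCommGroup (A p q)] [∀ p q, Module ℂ (A p q)]
variable (d : ∀ p q : ℤ, A p q →ₗ[ℂ] A (p + 1) q) (db : ∀ p q : ℤ, A p q →ₗ[ℂ] A p (q + 1))

lemma imd_succ (p q : ℤ) : imd A d (p + 1) q = range (d p q) := by
  have range_cast : ∀ (r : ℤ) (hr : r + 1 = p + 1),
      range (castA A hr rfl ∘ₗ d r q) = range (d p q) := by
    intro r hr
    obtain rfl := add_right_cancel hr
    rfl
  exact range_cast _ _

lemma imdb_succ (p q : ℤ) : imdb A db p (q + 1) = range (db p q) := by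
  have range_cast : ∀ (s : ℤ) (hs : s + 1 = q + 1),
      range (castA A rfl hs ∘ₗ db p s) = range (db p q) := by
    intro s hs
    obtain rfl := add_right_cancel hs
    rfl
  exact range_cast _ _

lemma imddb_succ_succ (p q : ℤ) : imddb A d db (p + 1) (q + 1) = range (ddb A d db p q) := by
  have range_cast : ∀ (r s : ℤ) (hr : r + 1 = p + 1) (hs : s + 1 = q + 1),
      range (castA A hr hs ∘ₗ ddb A d db r s) = range (ddb A d db p q) := by
    intro r s hr hs
    obtain rfl := add_right_cancel hr
    obtain rfl := add_right_cancel hs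
    rfl
  exact range_cast _ _ _ _

end Images

section DoubleComplex

variable {A : ℤ → ℤ → Type*} [∀ p q, AddCommGroup (A p q)] [∀ p q, Module ℂ (A p q)]
variable {d : ∀ p q : ℤ, A p q →ₗ[ℂ] A (p + 1) q} {db : ∀ p q : ℤ, A p q →ₗ[ℂ] A p (q + 1)}

lemma imd_le_kerd (hd2 : ∀ p q : ℤ, (d (p + 1) q).comp (d p q) = 0) (p q : ℤ) :
    imd A d p q ≤ kerd A d p q := by
  obtain ⟨r, rfl⟩ : ∃ r, p = r + 1 := ⟨p - 1, by ring⟩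
  rw [imd_succ]
  exact range_le_ker_iff.2 (hd2 r q)

lemma imdb_le_kerdb (hdb2 : ∀ p q : ℤ, (db p (q + 1)).comp (db p q) = 0) (p q : ℤ) :
    imdb A db p q ≤ kerdb A db p q := by
  obtain ⟨s, rfl⟩ : ∃ s, q = s + 1 := ⟨q - 1, by ring⟩
  rw [imdb_succ]
  exact range_le_ker_iff.2 (hdb2 p s)

lemma map_d_imdb
    (hanti : ∀ p q : ℤ, (db (p + 1) q).comp (d p q) + (d p (q + 1)).comp (db p q) = 0)
    (p q : ℤ) : (imdb A db p q).map (d p q) = imddb A d db (p + 1) q := by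
  obtain ⟨s, rfl⟩ : ∃ s, q = s + 1 := ⟨q - 1, by ring⟩
  rw [imdb_succ, imddb_succ_succ, ← range_comp, ddb, eq_neg_of_add_eq_zero_left (hanti p s),
    range_neg]

lemma map_d_kerdb_le_imd_inf_kerdb
    (hanti : ∀ p q : ℤ, (db (p + 1) q).comp (d p q) + (d p (q + 1)).comp (db p q) = 0)
    (p q : ℤ) : (kerdb A db p q).map (d p q) ≤ imd A d (p + 1) q ⊓ kerdb A db (p + 1) q := by
  refine le_inf (imd_succ A d p q ▸ map_le_range) (map_le_iff_le_comap.2 fun a ha => ?_)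
  have hanti_a : db (p + 1) q (d p q a) + d p (q + 1) (db p q a) = 0 :=
    LinearMap.congr_fun (hanti p q) a
  rwa [LinearMap.mem_ker.1 ha, map_zero, add_zero] at hanti_a

lemma phiPlus_injective_iff (hd2 : ∀ p q : ℤ, (d (p + 1) q).comp (d p q) = 0)
    (hanti : ∀ p q : ℤ, (db (p + 1) q).comp (d p q) + (d p (q + 1)).comp (db p q) = 0)
    (p q : ℤ) :
    Function.Injective (phiPlus A d db hanti p q) ↔
      imd A d p q ⊓ kerdb A db p q ≤ imddb A d db p q := by
  rw [phiPlus, qmap_injective_iff, inf_right_comm, inf_eq_right.2 (imd_le_kerd hd2 p q)]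

lemma phiMinus_surjective_iff (hdb2 : ∀ p q : ℤ, (db p (q + 1)).comp (db p q) = 0)
    (hanti : ∀ p q : ℤ, (db (p + 1) q).comp (d p q) + (d p (q + 1)).comp (db p q) = 0)
    (p q : ℤ) :
    Function.Surjective (phiMinus A d db p q) ↔
      (kerdb A db p q).map (d p q) ≤ imddb A d db (p + 1) q := by
  have modular_law : kerd A d p q ⊓ kerdb A db p q ⊔ imdb A db p q =
      (imdb A db p q ⊔ kerd A d p q) ⊓ kerdb A db p q := by
    rw [sup_comm, sup_inf_assoc_of_le _ (imdb_le_kerdb hdb2 p q)]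
  calc Function.Surjective (phiMinus A d db p q)
      ↔ kerdb A db p q ≤ kerd A d p q ⊓ kerdb A db p q ⊔ imdb A db p q :=
        qmap_surjective_iff _ _
    _ ↔ kerdb A db p q ≤ imdb A db p q ⊔ ker (d p q) := by
        rw [modular_law, le_inf_iff, and_iff_left le_rfl, kerd]
    _ ↔ (kerdb A db p q).map (d p q) ≤ imddb A d db (p + 1) q := by
        rw [← LinearMap.map_le_map_iff, map_d_imdb hanti]

end DoubleComplex

theorem phiPlus_injective_implies_phiMinus_surjective_general
    {A : ℤ → ℤ → Type*} [∀ p q, AddCommGroup (A p q)] [∀ p q, Module ℂ (A p q)]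
    {d : ∀ p q : ℤ, A p q →ₗ[ℂ] A (p + 1) q} {db : ∀ p q : ℤ, A p q →ₗ[ℂ] A p (q + 1)}
    (hd2 : ∀ p q : ℤ, (d (p + 1) q).comp (d p q) = 0)
    (hdb2 : ∀ p q : ℤ, (db p (q + 1)).comp (db p q) = 0)
    (hanti : ∀ p q : ℤ, (db (p + 1) q).comp (d p q) + (d p (q + 1)).comp (db p q) = 0)
    (p q : ℤ) (hinj : Function.Injective (phiPlus A d db hanti p q)) :
    Function.Surjective (phiMinus A d db (p - 1) q) := by
  obtain ⟨r, rfl⟩ : ∃ r, p = r + 1 := ⟨p - 1, by ring⟩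
  rw [add_sub_cancel_right, phiMinus_surjective_iff hdb2 hanti]
  calc (kerdb A db r q).map (d r q)
      ≤ imd A d (r + 1) q ⊓ kerdb A db (r + 1) q := map_d_kerdb_le_imd_inf_kerdb hanti r q
    _ ≤ imddb A d db (r + 1) q := (phiPlus_injective_iff hd2 hanti (r + 1) q).1 hinj

/-- if `φ^{p,q}_+` is injective then `φ^{p-1,q}_-` is surjective. -/
theorem phiPlus_injective_implies_phiMinus_surjective
    (A : ℤ → ℤ → Type*) [∀ p q, AddCommGroup (A p q)] [∀ p q, Module ℂ (A p q)]
    (hA0 : ∀ p q : ℤ, p < 0 ∨ q < 0 → ∀ x : A p q, x = 0)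
    (d : ∀ p q : ℤ, A p q →ₗ[ℂ] A (p + 1) q) (db : ∀ p q : ℤ, A p q →ₗ[ℂ] A p (q + 1))
    (hd2 : ∀ p q : ℤ, (d (p + 1) q).comp (d p q) = 0)
    (hdb2 : ∀ p q : ℤ, (db p (q + 1)).comp (db p q) = 0)
    (hanti : ∀ p q : ℤ, (db (p + 1) q).comp (d p q) + (d p (q + 1)).comp (db p q) = 0)
    (p q : ℤ) (hp : 1 ≤ p) (hq : 0 ≤ q)
    (hinj : Function.Injective ⇑(phiPlus A d db hanti p q)) :
    Function.Surjective ⇑(phiMinus A d db (p - 1) q) := by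
  exact phiPlus_injective_implies_phiMinus_surjective_general hd2 hdb2 hanti p q hinj
end
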